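/- Let j ≥ 1 be an integer, m_j(r) := c′_j (1+r²)^{−j} with c′_j > 0 chosen so that ∫_ℝ m_j = 1, and m̂_j(s) := ∫_ℝ m_j(r) e^{−i r s} dr. For ξ ∈ ℝ³ ∖ {0} and θ ∈ ℝ define K_j(ξ, θ) := ∫₀^∞ t m̂_j(t|ξ|) e^{−i t θ} dt. Then, with z := θ − i|ξ|, K_j(ξ, θ) = −z^{−2} Σ_{p=0}^{j−1} a_p^{(j)} (|ξ|/(i z))^p, where the coefficients a_p^{(j)} are the positive numbers defined by the recursion: a₀^{(1)} := 1; N^{(j+1)} := Σ_{k=0}^{j−1} a_k^{(j)} / (2^k (k+1)); a₀^{(j+1)} := 1; and a_p^{(j+1)} := ((p+1) 2^{p−1} / N^{(j+1)}) Σ_{k=p−1}^{j−1} a_k^{(j)} / (2^k (k+1)) for 1 ≤ p ≤ j. -/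

import Mathlib

open MeasureTheory

noncomputable section

/-- The coefficients `a_p^{(j)}` of the kernels of the generalized Poisson equilibria,
defined by: `a₀^{(1)} = 1`; `N^{(j+1)} = Σ_{k=0}^{j-1} a_k^{(j)}/(2^k(k+1))`;
`a₀^{(j+1)} = 1`; `a_p^{(j+1)} = ((p+1)2^{p-1}/N^{(j+1)}) Σ_{k=p-1}^{j-1} a_k^{(j)}/(2^k(k+1))`
for `1 ≤ p ≤ j`. -/
def aCoef : ℕ → ℕ → ℝ
  | 0, _ => 0
  | 1, 0 => 1
  | 1, _ + 1 => 0
  | j + 2, 0 => 1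
  | j + 2, p + 1 =>
      ((p + 2 : ℝ) * 2 ^ p /
          ∑ k ∈ Finset.range (j + 1), aCoef (j + 1) k / (2 ^ k * (k + 1))) *
        ∑ k ∈ Finset.Icc p j, aCoef (j + 1) k / (2 ^ k * (k + 1))

/-- The reduced distribution `m_j(r) = c′_j (1+r²)^{-j}` of the generalized Poisson
equilibrium, normalized so that `∫ m_j = 1`. -/
def mj (j : ℕ) (r : ℝ) : ℝ :=
  (∫ s : ℝ, (((1 + s ^ 2) ^ j : ℝ))⁻¹)⁻¹ * (((1 + r ^ 2) ^ j : ℝ))⁻¹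

/-- The one-dimensional Fourier transform `m̂_j(s) = ∫ m_j(r) e^{-irs} dr`. -/
def mjHat (j : ℕ) (s : ℝ) : ℂ :=
  ∫ r : ℝ, (mj j r : ℂ) * Complex.exp (-(Complex.I * (r : ℂ) * (s : ℂ)))

/-- The polarization kernel `K_j(ξ,θ) = ∫₀^∞ t m̂_j(t|ξ|) e^{-itθ} dt`. -/
def Kj (j : ℕ) (ξ : EuclideanSpace ℝ (Fin 3)) (θ : ℝ) : ℂ :=
  ∫ t in Set.Ioi (0 : ℝ), (t : ℂ) * mjHat j (t * ‖ξ‖) * Complex.exp (-(Complex.I * (t : ℂ) * (θ : ℂ)))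


theorem aCoef_pos : ∀ (j : ℕ) (p : ℕ), p < j → 0 < aCoef j p := by
  intro j
  induction j with
  | zero => intro p hp; omega
  | succ j ih =>
    intro p hp
    rcases j with _ | j
    · have : p = 0 := by omega
      subst this
      simp [aCoef]
    · rcases p with _ | p
      · simp [aCoef]
      · rw [aCoef]
        have h1 : 0 < ∑ k ∈ Finset.range (j + 1), aCoef (j + 1) k / (2 ^ k * (k + 1)) := by
          apply Finset.sum_pos
          · intro k hk
            have := ih k (Finset.mem_range.1 hk)
            positivity
          · exact ⟨0, by simp⟩
        have h2 : 0 < ∑ k ∈ Finset.Icc p j, aCoef (j + 1) k / (2 ^ k * (k + 1)) := by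
          apply Finset.sum_pos
          · intro k hk
            have := ih k (by have := (Finset.mem_Icc.1 hk).2; omega)
            positivity
          · exact ⟨p, by simp; omega⟩
        positivity

theorem mul_S (w v : ℂ) (h : w + v = 2 * (w * v)) (n : ℕ) :
    w * v * (w ^ (n + 1) + v ^ (n + 1)) =
      (∑ m ∈ Finset.range (n + 1), 2 ^ m * (w ^ (m + 2) + v ^ (m + 2))) / 2 ^ (n + 1)
        + (w + v) / 2 ^ (n + 1) := by
  induction n with
  | zero =>
    simp
    linear_combination (-(w + v) / 2 - 1/2) * h
  | succ n ih =>
    rw [Finset.sum_range_succ]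
    have e : w * v * (w ^ (n + 1 + 1) + v ^ (n + 1 + 1)) =
      (w * v * (w ^ (n + 1) + v ^ (n + 1)) + (w ^ (n + 3) + v ^ (n + 3))) / 2 := by
      linear_combination (-(w ^ (n + 2) + v ^ (n + 2)) / 2) * h
    rw [e, ih]
    field_simp
    ring

theorem S_identity (j : ℕ) : ∃ C : ℝ, 0 < C ∧ ∀ w v : ℂ, w + v = 2 * (w * v) →
    ∑ k ∈ Finset.range (j + 1), ((aCoef (j + 1) k : ℂ) / (k + 1)) * (w ^ (k + 1) + v ^ (k + 1))
      = C * (w * v) ^ (j + 1) := by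
  induction j with
  | zero =>
    refine ⟨2, by norm_num, fun w v h => ?_⟩
    simp [aCoef, h]
  | succ j ih =>
    obtain ⟨C, hC, H⟩ := ih
    set N : ℝ := ∑ k ∈ Finset.range (j + 1), aCoef (j + 1) k / (2 ^ k * (k + 1)) with hN
    have hNpos : 0 < N := by
      apply Finset.sum_pos
      · intro k hk
        have := aCoef_pos (j + 1) k (Finset.mem_range.1 hk)
        positivity
      · exact ⟨0, by simp⟩
    refine ⟨2 * C / N, by positivity, fun w v h => ?_⟩
    have hN0 : (N : ℂ) ≠ 0 := by exact_mod_cast hNpos.ne'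
    have H1 := H w v h
    rw [Finset.sum_range_succ']
    have e1 : ∀ m : ℕ, ((aCoef (j + 1 + 1) (m + 1) : ℂ) / ((m + 1 : ℕ) + 1))
        = (∑ k ∈ Finset.Icc m j, (aCoef (j + 1) k : ℂ) / (2 ^ k * (k + 1))) * 2 ^ m / N := by
      intro m
      rw [aCoef, ← hN]
      push_cast
      have : (m : ℂ) + 2 ≠ 0 := by norm_cast
      have h3 : (m : ℂ) + 1 + 1 ≠ 0 := by norm_cast
      field_simp
      ring
    have e2 : (aCoef (j + 1 + 1) 0 : ℂ) = 1 := by simp [aCoef]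
    have e3 : ∑ m ∈ Finset.range (j + 1),
        (∑ k ∈ Finset.Icc m j, (aCoef (j + 1) k : ℂ) / (2 ^ k * (k + 1))) * 2 ^ m *
          (w ^ (m + 2) + v ^ (m + 2)) =
        ∑ k ∈ Finset.range (j + 1), (aCoef (j + 1) k : ℂ) / (2 ^ k * (k + 1)) *
          ∑ m ∈ Finset.range (k + 1), 2 ^ m * (w ^ (m + 2) + v ^ (m + 2)) := by
      simp_rw [Finset.sum_mul, Finset.mul_sum]
      rw [Finset.sum_comm' (t' := Finset.range (j + 1)) (s' := fun k => Finset.range (k + 1))]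
      · refine Finset.sum_congr rfl fun k _ => Finset.sum_congr rfl fun m _ => by ring
      · intro x y
        simp only [Finset.mem_range, Finset.mem_Icc]
        omega
    have e4 : w * v * (C * (w * v) ^ (j + 1)) =
        (∑ k ∈ Finset.range (j + 1), (aCoef (j + 1) k : ℂ) / (2 ^ k * (k + 1)) *
          ∑ m ∈ Finset.range (k + 1), 2 ^ m * (w ^ (m + 2) + v ^ (m + 2))) / 2
          + N * (w + v) / 2 := by
      rw [← H1, Finset.mul_sum, hN]
      push_cast
      rw [Finset.sum_mul, Finset.sum_div, Finset.sum_div, ← Finset.sum_add_distrib]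
      refine Finset.sum_congr rfl fun k _ => ?_
      have := mul_S w v h k
      have hk : (k : ℂ) + 1 ≠ 0 := by norm_cast
      calc _ = (aCoef (j + 1) k : ℂ) / (k + 1) * (w * v * (w ^ (k + 1) + v ^ (k + 1))) := by ring
        _ = _ := by
          rw [this]
          field_simp
          ring
    have e5 : ∑ k ∈ Finset.range (j + 1), (aCoef (j + 1 + 1) (k + 1) : ℂ) / ((k + 1 : ℕ) + 1) *
        (w ^ (k + 1 + 1) + v ^ (k + 1 + 1)) = (∑ m ∈ Finset.range (j + 1),
        (∑ k ∈ Finset.Icc m j, (aCoef (j + 1) k : ℂ) / (2 ^ k * (k + 1))) * 2 ^ m *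
          (w ^ (m + 2) + v ^ (m + 2))) / N := by
      rw [Finset.sum_div]
      refine Finset.sum_congr rfl fun k _ => ?_
      rw [e1]
      ring
    rw [e5, e3, e2]
    generalize (∑ k ∈ Finset.range (j + 1), (aCoef (j + 1) k : ℂ) / (2 ^ k * (k + 1)) *
          ∑ m ∈ Finset.range (k + 1), 2 ^ m * (w ^ (m + 2) + v ^ (m + 2))) = X at e4 ⊢
    push_cast
    simp only [zero_add, pow_one, div_one, one_mul]
    field_simp
    linear_combination (-2) * e4

theorem integrableOn_pow_exp (r : ℂ) (hr : 0 < r.re) (n : ℕ) :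
    IntegrableOn (fun t : ℝ => (t : ℂ) ^ n * Complex.exp (-(r * t))) (Set.Ioi 0) := by
  have h : IntegrableOn (fun t : ℝ => t ^ n * Real.exp (-(r.re * t))) (Set.Ioi 0) := by
    apply Integrable.of_integral_ne_zero
    have := Real.integral_rpow_mul_exp_neg_mul_Ioi (a := n + 1) (by positivity) hr
    simp only [add_sub_cancel_right, Real.rpow_natCast] at this
    rw [this]
    have := Real.Gamma_pos_of_pos (s := (n : ℝ) + 1) (by positivity)
    positivity
  refine Integrable.mono' h (by fun_prop) ?_
  filter_upwards [ae_restrict_mem measurableSet_Ioi] with t ht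
  have ht' : (0 : ℝ) < t := ht
  simp [Complex.norm_exp, abs_of_pos ht']

theorem integral_pow_exp (r : ℂ) (hr : 0 < r.re) (n : ℕ) :
    ∫ t in Set.Ioi (0 : ℝ), (t : ℂ) ^ n * Complex.exp (-(r * t)) = n.factorial / r ^ (n + 1) := by
  have hr0 : r ≠ 0 := by rintro rfl; simp at hr
  induction n with
  | zero =>
    have := integral_exp_mul_complex_Ioi (a := -r) (by simpa using hr) 0
    simp only [pow_zero, one_mul, Nat.factorial_zero, Nat.cast_one, zero_add, pow_one]
    simpa using this
  | succ n ih =>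
    have hd : ∀ t : ℝ, HasDerivAt (fun t : ℝ => (t : ℂ) ^ (n + 1) * Complex.exp (-(r * t)))
        ((n + 1) * ((t : ℂ) ^ n * Complex.exp (-(r * t)))
          - r * ((t : ℂ) ^ (n + 1) * Complex.exp (-(r * t)))) t := by
      intro t
      have h1 : HasDerivAt (fun t : ℂ => t ^ (n + 1) * Complex.exp (-(r * t)))
        ((n + 1) * ((t : ℂ) ^ n * Complex.exp (-(r * t)))
          - r * ((t : ℂ) ^ (n + 1) * Complex.exp (-(r * t)))) (t : ℂ) := by
        have h0 := (hasDerivAt_pow (n + 1) (t : ℂ)).mul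
          (((hasDerivAt_id (t : ℂ)).const_mul r).neg.cexp)
        refine HasDerivAt.congr_deriv h0 ?_
        push_cast
        simp only [Nat.add_sub_cancel, mul_one, id, Pi.neg_apply]
        ring
      exact h1.comp_ofReal
    have i1 := (integrableOn_pow_exp r hr n).const_mul ((n : ℂ) + 1)
    have i2 := (integrableOn_pow_exp r hr (n + 1)).const_mul r
    have ht := tendsto_zero_of_hasDerivAt_of_integrableOn_Ioi (a := 0) (fun t _ => hd t)
      (i1.sub i2) (integrableOn_pow_exp r hr (n + 1))
    have := integral_Ioi_of_hasDerivAt_of_tendsto' (a := 0) (fun t _ => hd t) (i1.sub i2) ht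
    rw [integral_sub i1 i2, integral_const_mul, integral_const_mul, ih] at this
    simp only [Complex.ofReal_zero, zero_pow (Nat.succ_ne_zero n), zero_mul, sub_zero] at this
    rw [Nat.factorial_succ]
    push_cast
    field_simp at this ⊢
    linear_combination -this

open scoped FourierTransform

theorem integrable_abs_exp (k : ℝ) (n : ℕ) :
    Integrable (fun x : ℝ => Complex.exp (-(Complex.I * k * x)) *
      ((|x| : ℝ) ^ n * Complex.exp (-(|x| : ℝ)))) ∧
    ∫ x : ℝ, Complex.exp (-(Complex.I * k * x)) *
      ((|x| : ℝ) ^ n * Complex.exp (-(|x| : ℝ))) =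
      n.factorial * ((1 / (1 + Complex.I * k)) ^ (n + 1) + (1 / (1 - Complex.I * k)) ^ (n + 1)) := by
  set f : ℝ → ℂ := fun x : ℝ => Complex.exp (-(Complex.I * k * x)) *
      ((|x| : ℝ) ^ n * Complex.exp (-(|x| : ℝ))) with hf
  have ep : Set.EqOn f (fun t : ℝ => (t : ℂ) ^ n * Complex.exp (-((1 + Complex.I * k) * t)))
      (Set.Ioi 0) := by
    intro t ht
    have ht' : (0 : ℝ) < t := ht
    simp only [hf, abs_of_pos ht']
    rw [mul_left_comm, ← Complex.exp_add]
    ring_nf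
  have em : Set.EqOn (fun t => f (-t))
      (fun t : ℝ => (t : ℂ) ^ n * Complex.exp (-((1 - Complex.I * k) * t)))
      (Set.Ioi 0) := by
    intro t ht
    have ht' : (0 : ℝ) < t := ht
    simp only [hf, abs_neg, abs_of_pos ht']
    rw [mul_left_comm, ← Complex.exp_add]
    push_cast
    ring_nf
  have r1 : 0 < (1 + Complex.I * (k : ℂ)).re := by simp
  have r2 : 0 < (1 - Complex.I * (k : ℂ)).re := by simp
  have ip : IntegrableOn f (Set.Ioi 0) :=
    (integrableOn_congr_fun ep measurableSet_Ioi).2 (integrableOn_pow_exp _ r1 n)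
  have im : IntegrableOn (fun t => f (-t)) (Set.Ioi 0) :=
    (integrableOn_congr_fun em measurableSet_Ioi).2 (integrableOn_pow_exp _ r2 n)
  have im' : IntegrableOn f (Set.Iic 0) := by
    rw [integrableOn_Iic_iff_integrableOn_Iio]
    have := IntegrableOn.comp_neg_Iio (c := 0) (f := fun t => f (-t)) (by simpa using im)
    simpa using this
  have hI : Integrable f := by
    rw [← integrableOn_univ, ← Set.Iic_union_Ioi (a := (0 : ℝ))]
    exact im'.union ip
  refine ⟨hI, ?_⟩
  rw [← setIntegral_univ, ← Set.Iic_union_Ioi (a := (0 : ℝ)),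
    setIntegral_union (Set.Iic_disjoint_Ioi le_rfl) measurableSet_Ioi im' ip]
  have h2 : ∫ x in Set.Iic 0, f x = ∫ x in Set.Ioi 0, f (-x) := by
    rw [integral_comp_neg_Ioi]; simp
  rw [h2, setIntegral_congr_fun measurableSet_Ioi ep, setIntegral_congr_fun measurableSet_Ioi em,
    integral_pow_exp _ r1, integral_pow_exp _ r2]
  simp only [one_div, inv_pow]
  ring

/-- The polynomial-exponential profile. -/
def gP (j : ℕ) (x : ℝ) : ℂ :=
  ∑ p ∈ Finset.range j, ((aCoef j p : ℂ) / (p + 1) / p.factorial) *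
    ((|x| : ℝ) ^ p * Complex.exp (-(|x| : ℝ)))

theorem gP_zero (j : ℕ) : gP (j + 1) 0 = 1 := by
  unfold gP
  rw [Finset.sum_range_succ']
  rcases j with _ | j <;> simp [aCoef]

theorem gP_ft (j : ℕ) : ∃ C : ℝ, 0 < C ∧ ∀ k : ℝ,
    Integrable (fun x : ℝ => Complex.exp (-(Complex.I * k * x)) * gP (j + 1) x) ∧
    ∫ x : ℝ, Complex.exp (-(Complex.I * k * x)) * gP (j + 1) x =
      C * (((1 + k ^ 2) ^ (j + 1) : ℝ))⁻¹ := by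
  obtain ⟨C, hC, H⟩ := S_identity j
  refine ⟨C, hC, fun k => ?_⟩
  have e : (fun x : ℝ => Complex.exp (-(Complex.I * k * x)) * gP (j + 1) x) = fun x : ℝ =>
      ∑ p ∈ Finset.range (j + 1), ((aCoef (j + 1) p : ℂ) / (p + 1) / p.factorial) *
      (Complex.exp (-(Complex.I * k * x)) * ((|x| : ℝ) ^ p * Complex.exp (-(|x| : ℝ)))) := by
    funext x
    unfold gP
    rw [Finset.mul_sum]
    exact Finset.sum_congr rfl fun p _ => by ring
  rw [e]
  have hi : ∀ p ∈ Finset.range (j + 1), Integrable (fun x : ℝ =>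
      ((aCoef (j + 1) p : ℂ) / (p + 1) / p.factorial) *
      (Complex.exp (-(Complex.I * k * x)) * ((|x| : ℝ) ^ p * Complex.exp (-(|x| : ℝ))))) :=
    fun p _ => (integrable_abs_exp k p).1.const_mul _
  refine ⟨integrable_finsetSum _ hi, ?_⟩
  rw [integral_finsetSum _ hi]
  have h1 : (1 + Complex.I * k : ℂ) ≠ 0 := by
    intro h; simpa using congrArg Complex.re h
  have h2 : (1 - Complex.I * k : ℂ) ≠ 0 := by
    intro h; simpa using congrArg Complex.re h
  have h3 : (1 + Complex.I * k : ℂ) * (1 - Complex.I * k) = 1 + k ^ 2 := by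
    linear_combination (-(k : ℂ) ^ 2) * Complex.I_sq
  have := H (1 / (1 + Complex.I * k)) (1 / (1 - Complex.I * k)) (by field_simp; ring)
  have h4 : (1 / (1 + Complex.I * k)) * (1 / (1 - Complex.I * k)) = (1 + (k : ℂ) ^ 2)⁻¹ := by
    rw [← h3]; field_simp
  rw [h4] at this
  push_cast
  rw [← inv_pow, ← this]
  refine Finset.sum_congr rfl fun p _ => ?_
  rw [integral_const_mul, (integrable_abs_exp k p).2]
  have : (p.factorial : ℂ) ≠ 0 := by exact_mod_cast p.factorial_ne_zero
  field_simp

theorem integrable_inv_pow (j : ℕ) : Integrable (fun r : ℝ => (((1 + r ^ 2) ^ (j + 1) : ℝ))⁻¹) := by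
  refine Integrable.mono' integrable_inv_one_add_sq (by fun_prop) ?_
  filter_upwards with r
  rw [Real.norm_eq_abs, abs_of_nonneg (by positivity)]
  have : (1 : ℝ) ≤ 1 + r ^ 2 := by nlinarith [sq_nonneg r]
  gcongr
  exact le_self_pow₀ this (by omega)

theorem gP_cont (j : ℕ) : Continuous (gP j) := by
  unfold gP
  fun_prop

theorem gP_inv (j : ℕ) : ∃ D : ℝ, 0 < D ∧ ∀ s : ℝ,
    ∫ r : ℝ, ((((1 + r ^ 2) ^ (j + 1) : ℝ))⁻¹ : ℝ) * Complex.exp (-(Complex.I * r * s))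
      = D * gP (j + 1) s := by
  obtain ⟨C, hC, H⟩ := gP_ft j
  have hF : 𝓕 (gP (j + 1)) = fun w : ℝ => (C : ℂ) * ((((1 + (2 * Real.pi * w) ^ 2) ^ (j + 1) : ℝ))⁻¹ : ℝ) := by
    funext w
    rw [Real.fourier_real_eq_integral_exp_smul]
    have := (H (2 * Real.pi * w)).2
    push_cast at this ⊢
    rw [← this]
    refine integral_congr_ae (Filter.Eventually.of_forall fun x => ?_)
    simp only [smul_eq_mul]
    congr 2
    ring
  have hI : Integrable (gP (j + 1)) := by simpa using (H 0).1
  have hp : (2 * Real.pi : ℝ) ≠ 0 := by positivity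
  have hI2 : Integrable (𝓕 (gP (j + 1))) := by
    rw [hF]
    exact ((integrable_inv_pow j).comp_mul_left' hp).ofReal.const_mul _
  have inv := (gP_cont (j + 1)).fourierInv_fourier_eq hI hI2
  refine ⟨2 * Real.pi / C, by positivity, fun s => ?_⟩
  have h := congrFun inv (-s)
  have hs : gP (j + 1) (-s) = gP (j + 1) s := by simp [gP]
  rw [hs, Real.fourierInv_eq', hF] at h
  rw [← h]
  have hc := Measure.integral_comp_mul_left (fun r : ℝ => ((((1 + r ^ 2) ^ (j + 1) : ℝ))⁻¹ : ℝ) *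
    Complex.exp (-(Complex.I * r * s))) (2 * Real.pi)
  have h5 : ∀ v : ℝ, Complex.exp (((2 * Real.pi * inner ℝ v (-s) : ℝ) : ℂ) * Complex.I) •
      ((C : ℂ) * ((((1 + (2 * Real.pi * v) ^ 2) ^ (j + 1) : ℝ))⁻¹ : ℝ)) =
      C * (((((1 + (2 * Real.pi * v) ^ 2) ^ (j + 1) : ℝ))⁻¹ : ℝ) *
        Complex.exp (-(Complex.I * ((2 * Real.pi * v : ℝ) : ℂ) * s))) := by
    intro v
    simp only [smul_eq_mul]
    have : (((2 * Real.pi * inner ℝ v (-s) : ℝ) : ℂ) * Complex.I) =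
      (-(Complex.I * ((2 * Real.pi * v : ℝ) : ℂ) * s)) := by
      simp
      ring
    rw [this]; ring
  simp_rw [h5]
  rw [integral_const_mul, hc, abs_of_pos (by positivity)]
  have hC0 : (C : ℂ) ≠ 0 := by exact_mod_cast hC.ne'
  have hpi : (Real.pi : ℂ) ≠ 0 := by exact_mod_cast Real.pi_ne_zero
  rw [Complex.real_smul]
  generalize (∫ r : ℝ, ((((1 + r ^ 2) ^ (j + 1) : ℝ))⁻¹ : ℝ) *
    Complex.exp (-(Complex.I * r * s))) = Y
  push_cast
  field_simp

theorem mjHat_eq (j : ℕ) (s : ℝ) : mjHat (j + 1) s = gP (j + 1) s := by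
  obtain ⟨D, hD, H⟩ := gP_inv j
  have h0 := H 0
  rw [gP_zero] at h0
  simp only [Complex.ofReal_zero, mul_zero, neg_zero, Complex.exp_zero, mul_one] at h0
  rw [integral_complex_ofReal] at h0
  have h1 : ∫ r : ℝ, (((1 + r ^ 2) ^ (j + 1) : ℝ))⁻¹ = D := by exact_mod_cast h0
  have hD0 : (D : ℂ) ≠ 0 := by exact_mod_cast hD.ne'
  unfold mjHat mj
  rw [h1]
  simp_rw [Complex.ofReal_mul, mul_assoc]
  rw [integral_const_mul]
  have := H s
  simp_rw [mul_assoc] at this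
  rw [this]
  push_cast
  field_simp

/-- The explicit formula `K_j(ξ,θ) = -z^{-2} Σ_{p=0}^{j-1} a_p^{(j)} (|ξ|/(iz))^p` with
`z = θ - i|ξ|` for the kernels of the generalized Poisson equilibria. -/
theorem kernel_formula_generalized_poisson (j : ℕ) (hj : 1 ≤ j)
    (ξ : EuclideanSpace ℝ (Fin 3)) (hξ : ξ ≠ 0) (θ : ℝ) :
    Kj j ξ θ =
      -(((θ : ℂ) - Complex.I * (‖ξ‖ : ℂ)) ^ 2)⁻¹ *
        ∑ p ∈ Finset.range j, (aCoef j p : ℂ) *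
          ((‖ξ‖ : ℂ) / (Complex.I * ((θ : ℂ) - Complex.I * (‖ξ‖ : ℂ)))) ^ p := by
  obtain ⟨j, rfl⟩ : ∃ i, j = i + 1 := ⟨j - 1, by omega⟩
  have hx : 0 < ‖ξ‖ := norm_pos_iff.2 hξ
  unfold Kj
  generalize ‖ξ‖ = x at hx
  simp_rw [mjHat_eq]
  set r : ℂ := Complex.I * ((θ : ℂ) - Complex.I * (x : ℂ)) with hr
  have hr' : r = x + Complex.I * θ := by
    rw [hr]; linear_combination (-(x : ℂ)) * Complex.I_sq
  have hre : 0 < r.re := by rw [hr']; simpa using hx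
  have hr0 : r ≠ 0 := by intro h; simp [h] at hre
  have hz : -(((θ : ℂ) - Complex.I * (x : ℂ)) ^ 2)⁻¹ = (r ^ 2)⁻¹ := by
    rw [hr, mul_pow, Complex.I_sq, neg_one_mul, inv_neg]
  rw [hz]
  have e : Set.EqOn (fun t : ℝ => (t : ℂ) * gP (j + 1) (t * x) *
      Complex.exp (-(Complex.I * (t : ℂ) * (θ : ℂ))))
      (fun t : ℝ => ∑ p ∈ Finset.range (j + 1),
        ((aCoef (j + 1) p : ℂ) / (p + 1) / p.factorial * x ^ p) *
        ((t : ℂ) ^ (p + 1) * Complex.exp (-(r * t)))) (Set.Ioi 0) := by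
    intro t ht
    have ht' : (0 : ℝ) < t := ht
    simp only [gP, abs_of_pos (mul_pos ht' hx)]
    rw [Finset.mul_sum, Finset.sum_mul]
    refine Finset.sum_congr rfl fun p _ => ?_
    have : Complex.exp (-(r * t)) = Complex.exp (-((t * x : ℝ) : ℂ)) *
        Complex.exp (-(Complex.I * (t : ℂ) * (θ : ℂ))) := by
      rw [← Complex.exp_add, hr']
      push_cast
      ring_nf
    rw [this]
    push_cast
    ring
  rw [setIntegral_congr_fun measurableSet_Ioi e, integral_finsetSum _
    (fun p _ => (integrableOn_pow_exp r hre (p + 1)).const_mul _), Finset.mul_sum]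
  refine Finset.sum_congr rfl fun p _ => ?_
  rw [integral_const_mul, integral_pow_exp r hre]
  have h1 : (p.factorial : ℂ) ≠ 0 := by exact_mod_cast p.factorial_ne_zero
  have h2 : (p : ℂ) + 1 ≠ 0 := by norm_cast
  rw [Nat.factorial_succ]
  push_cast
  rw [div_pow]
  field_simp
  try ring
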